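/- Consider the system with n = 2, m = 1, p = 2 given by A = [[0,0],[1,0]], B = (1;0), C = I_2, D = 0, with d = (0,0,1) (so d_2 = d_1 = 0, d_0 = 1, satisfying d_0 ≠ 0, ‖d‖_2 = 1 and A² = 0) and corresponding M = [[0,1,0],[1,0,0]]. Let N ≥ 3 and let the input be u_0 = 1 and u_k = 0 for 1 ≤ k ≤ N−1. Then: (i) for every initial state x_0 ∈ ℝ², the output sequence {y_k}_{k=0}^{N−1} generated from x_0 under u is persistently exciting of order 1 (i.e., Σ_{k=0}^{N−1} y_k y_k^T is positive definite); but (ii) the sequence {M u_{[k−2,k]}}_{k=2}^{N−1} is not persistently exciting of order 1 (i.e., Σ_{k=2}^{N−1} (M u_{[k−2,k]})(M u_{[k−2,k]})^T is singular). This disproves the claim that persistent excitation of order 1 of {M u_{[k−n,k]}}_{k=n}^{N−1} is necessary for the output to be persistently exciting of order 1 for all initial conditions. -/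

import Mathlib

open Matrix Finset

noncomputable def stateSeq {n m : ℕ} (A : Matrix (Fin n) (Fin n) ℝ) (B : Matrix (Fin n) (Fin m) ℝ)
    (x0 : Fin n → ℝ) (u : ℕ → Fin m → ℝ) : ℕ → Fin n → ℝ
  | 0 => x0
  | k + 1 => A.mulVec (stateSeq A B x0 u k) + B.mulVec (u k)

/-- Output sequence `y_k = C x_k + D u_k` of the LTI system started at `x0` with input `u`. -/
noncomputable def outputSeq {n m p : ℕ} (A : Matrix (Fin n) (Fin n) ℝ) (B : Matrix (Fin n) (Fin m) ℝ)
    (C : Matrix (Fin p) (Fin n) ℝ) (D : Matrix (Fin p) (Fin m) ℝ)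
    (x0 : Fin n → ℝ) (u : ℕ → Fin m → ℝ) (k : ℕ) : Fin p → ℝ :=
  C.mulVec (stateSeq A B x0 u k) + D.mulVec (u k)

/-- Markov parameters: `Γ_0 = D`, `Γ_j = C A^(j-1) B` for `j ≥ 1`. -/
noncomputable def Markov {n m p : ℕ} (A : Matrix (Fin n) (Fin n) ℝ) (B : Matrix (Fin n) (Fin m) ℝ)
    (C : Matrix (Fin p) (Fin n) ℝ) (D : Matrix (Fin p) (Fin m) ℝ) : ℕ → Matrix (Fin p) (Fin m) ℝ
  | 0 => D
  | j + 1 => C * A ^ j * B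

/-- The matrix `M = [M_n ⋯ M_1 M_0]` with `M_j = ∑_{q=0}^j d_{j-q} Γ_q`; the block at
block-column `i` (from the left, `i = 0,…,n`) is `M_{n-i}`. -/
noncomputable def Mmat {n m p : ℕ} (A : Matrix (Fin n) (Fin n) ℝ) (B : Matrix (Fin n) (Fin m) ℝ)
    (C : Matrix (Fin p) (Fin n) ℝ) (D : Matrix (Fin p) (Fin m) ℝ) (d : ℕ → ℝ) :
    Matrix (Fin p) (Fin (n + 1) × Fin m) ℝ :=
  Matrix.of fun i jl =>
    (∑ q ∈ Finset.range ((n - (jl.1 : ℕ)) + 1),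
      d ((n - (jl.1 : ℕ)) - q) • Markov A B C D q) i jl.2

/-- The impulse input `u_0 = 1`, `u_k = 0` for `k ≥ 1` of the counterexample. -/
noncomputable def exU : ℕ → Fin 1 → ℝ := fun k _ => if k = 0 then 1 else 0

/-- counterexample to necessity: for the system `A = [[0,0],[1,0]]`,
`B = (1;0)`, `C = I₂`, `D = 0` with `M = [[0,1,0],[1,0,0]]` and impulse input:
(i) for every `x0` the output is PE of order 1, but (ii) `{M u_{[k-2,k]}}_{k=2}^{N-1}` is not PE
of order 1. -/
theorem stmt_19 (N : ℕ) (hN : 3 ≤ N) :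
    (∀ x0 : Fin 2 → ℝ,
      (∑ k ∈ Finset.range N,
        vecMulVec
          (outputSeq !![(0 : ℝ), 0; 1, 0] !![(1 : ℝ); 0] (1 : Matrix (Fin 2) (Fin 2) ℝ)
            (0 : Matrix (Fin 2) (Fin 1) ℝ) x0 exU k)
          (outputSeq !![(0 : ℝ), 0; 1, 0] !![(1 : ℝ); 0] (1 : Matrix (Fin 2) (Fin 2) ℝ)
            (0 : Matrix (Fin 2) (Fin 1) ℝ) x0 exU k)).PosDef) ∧
    ¬ (∑ k ∈ Finset.range (N - 2),
        vecMulVec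
          ((!![(0 : ℝ), 1, 0; 1, 0, 0]).mulVec fun i : Fin 3 => exU (k + (i : ℕ)) 0)
          ((!![(0 : ℝ), 1, 0; 1, 0, 0]).mulVec fun i : Fin 3 => exU (k + (i : ℕ)) 0)).PosDef := by
  constructor
  · intro x0
    set y := outputSeq !![(0 : ℝ), 0; 1, 0] !![(1 : ℝ); 0] (1 : Matrix (Fin 2) (Fin 2) ℝ)
            (0 : Matrix (Fin 2) (Fin 1) ℝ) x0 exU with hy
    have h10 : y 1 0 = 1 := by
      simp [hy, outputSeq, stateSeq, exU, Matrix.mulVec, dotProduct, Fin.sum_univ_two]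
    have h20 : y 2 0 = 0 := by
      simp [hy, outputSeq, stateSeq, exU, Matrix.mulVec, dotProduct, Fin.sum_univ_two,
        Matrix.vecHead, Matrix.vecTail]
    have h21 : y 2 1 = 1 := by
      simp [hy, outputSeq, stateSeq, exU, Matrix.mulVec, dotProduct, Fin.sum_univ_two,
        Matrix.vecHead, Matrix.vecTail]
    clear_value y
    refine Matrix.PosDef.of_dotProduct_mulVec_pos ?_ ?_
    · ext i j
      simp [Matrix.sum_apply, vecMulVec_apply, mul_comm]
    · intro v hv
      have key : star v ⬝ᵥ ((∑ k ∈ Finset.range N, vecMulVec (y k) (y k)) *ᵥ v)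
          = ∑ k ∈ Finset.range N, (v ⬝ᵥ y k) ^ 2 := by
        rw [Matrix.sum_mulVec, dotProduct_sum]
        refine Finset.sum_congr rfl fun k _ => ?_
        simp [vecMulVec_apply, Matrix.mulVec, dotProduct, Fin.sum_univ_two]
        ring
      rw [key]
      refine lt_of_le_of_ne (Finset.sum_nonneg fun k _ => sq_nonneg _) fun h0 => hv ?_
      have hz := (Finset.sum_eq_zero_iff_of_nonneg (fun k _ => sq_nonneg (v ⬝ᵥ y k))).1 h0.symm
      have h1 := pow_eq_zero_iff (two_ne_zero) |>.1 (hz 1 (Finset.mem_range.2 (by omega)))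
      have h2 := pow_eq_zero_iff (two_ne_zero) |>.1 (hz 2 (Finset.mem_range.2 (by omega)))
      simp only [dotProduct, Fin.sum_univ_two, h10, h20, h21] at h1 h2
      have hv1 : v 1 = 0 := by linarith
      have hv0 : v 0 = 0 := by rw [hv1] at h1; linarith
      ext i
      fin_cases i
      · exact hv0
      · exact hv1
  · intro h
    have h0 := h.diag_pos (i := 0)
    simp [Matrix.sum_apply, vecMulVec_apply, Matrix.mulVec, dotProduct, Fin.sum_univ_three,
      exU] at h0
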